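/- For every s ∈ S⁺ and every admissible partition v ∈ AP(s), the Möbius function of the lattice AP(s) satisfies m(v|1_s) = (−1)^{b(v)−1} a(v), where b(v) is the number of blocks of v and a(v) is the number of admissible shuffles of v. -/

import Mathlib

/-- The two-letter alphabet `{z, w}`. -/
inductive Letter | z | w
deriving DecidableEq

/-- Words: elements of the free monoid `S = FS({z,w})`. -/
abbrev Word := List Letter

/-- The letter of `s` at position `j` (defaulting to `z`). -/
def letterAt (s : Word) (j : ℕ) : Letter := s.getD j Letter.z

/-- `P` is a partition of the finite set of positions `g ⊆ ℕ` into nonempty blocks. -/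
def IsPartitionOn (g : Finset ℕ) (P : Finset (Finset ℕ)) : Prop :=
  (∀ b ∈ P, b.Nonempty) ∧ (P : Set (Finset ℕ)).PairwiseDisjoint id ∧ P.sup id = g

/-- The position `j` is inner with respect to the block `b`:
`j ∉ b` and `min b < j < max b`. -/
def InnerPos (j : ℕ) (b : Finset ℕ) : Prop :=
  j ∉ b ∧ ∃ i ∈ b, ∃ k ∈ b, i < j ∧ j < k

/-- A partition is admissible if no block contains a letter `w` that is inner
with respect to another block. -/
def Admissible (s : Word) (P : Finset (Finset ℕ)) : Prop :=
  ∀ b ∈ P, ∀ b' ∈ P, b ≠ b' → ∀ j ∈ b, letterAt s j = Letter.w → ¬ InnerPos j b'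

open scoped Classical in
/-- The set `AP(s)` of admissible partitions of the positions `g` of the word `s`. -/
noncomputable def APfin (s : Word) (g : Finset ℕ) : Finset (Finset (Finset ℕ)) :=
  g.powerset.powerset.filter fun P => IsPartitionOn g P ∧ Admissible s P

/-- The subword of `s` determined by a set of positions `b`. -/
def wordOf (s : Word) (b : Finset ℕ) : Word :=
  (b.sort (· ≤ ·)).map (letterAt s)

/-- `L` is the family of admissible cumulants of the moment function `M`:
`M(s) = Σ_{u ∈ AP(s)} L(u₁)⋯L(u_p)` for every nonempty word `s`. -/
def IsCumulants (M L : Word → ℂ) : Prop :=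
  ∀ s : Word, s ≠ [] →
    M s = ∑ P ∈ APfin s (Finset.range s.length), ∏ b ∈ P, L (wordOf s b)

/-- `P` refines `Q`: every block of `P` is contained in a block of `Q`. -/
def Refines (P Q : Finset (Finset ℕ)) : Prop := ∀ b ∈ P, ∃ c ∈ Q, b ⊆ c

open scoped Classical in
/-- `m` is the Möbius function of the lattice `AP(s)` of admissible partitions of
the position set `g` of `s`: `m(u|u) = 1` and `m(u|v) = −Σ_{u ≤ t < v} m(u|t)`. -/
noncomputable def IsMobius (s : Word) (g : Finset ℕ)
    (m : Finset (Finset ℕ) → Finset (Finset ℕ) → ℂ) : Prop :=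
  (∀ u ∈ APfin s g, m u u = 1) ∧
    ∀ u ∈ APfin s g, ∀ v ∈ APfin s g, Refines u v → u ≠ v →
      m u v = -∑ t ∈ (APfin s g).filter fun t => Refines u t ∧ Refines t v ∧ t ≠ v, m u t

/-- `c` is the last block of `P`: the block with the largest least element. -/
def IsLastBlock (P : Finset (Finset ℕ)) (c : Finset ℕ) : Prop :=
  c ∈ P ∧ ∀ b ∈ P, b ≠ c → ∃ i ∈ b, ∀ j ∈ c, i < j

/-- One transition of a shuffle: merge the last block of `P` into one of the other
blocks. -/
def MergeStep (P Q : Finset (Finset ℕ)) : Prop :=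
  ∃ c, IsLastBlock P c ∧ ∃ b ∈ P, b ≠ c ∧ Q = insert (b ∪ c) ((P.erase b).erase c)

/-- `a(u)`: the number of admissible shuffles of `u`, i.e. of sequences
`u = u⁰ → u¹ → ⋯ → 1_s` of admissible partitions of `s`, each obtained from the
previous one by merging its last block into another block (`a(u) = 0` if `u` is
not an admissible partition of `s`). -/
noncomputable def shuffleCount (s : Word) (u : Finset (Finset ℕ)) : ℕ :=
  Set.ncard {Lst : List (Finset (Finset ℕ)) |
    Lst.head? = some u ∧ Lst.getLast? = some {Finset.range s.length} ∧
    (∀ P ∈ Lst, P ∈ APfin s (Finset.range s.length)) ∧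
    Lst.Chain' MergeStep}

/-! Let `c` be the last block of an admissible partition `v ≠ 1` of `g`. The two-block partition
`a = {c, g \ c}` is again admissible: since every other block of `v` starts before `c`, a letter of
`c` that is inner with respect to `g \ c` is already inner with respect to a block of `v`. The
solutions `x` of `x ⊓ a = v` are `v` itself and the partitions obtained from `v` by merging `c` into
another block, so Weisner's theorem gives `m(v|1) = -∑ m(x|1)`, where `x` runs over the admissible
first steps of a shuffle of `v`. Iterating this recursion counts the shuffles of `v`, each with the
sign `(-1)^(b(v) - 1)` because every step removes one block. -/

open Finset IncidenceAlgebra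

section Mobius

variable {𝕜 α : Type*} [Ring 𝕜] [SemilatticeInf α] [LocallyFiniteOrder α] [DecidableEq α]

/-- This is the dual form of Weisner's theorem. -/
theorem sum_mu_filter_inf_eq {a t : α} (hat : a < t) (v : α) :
    ∑ x ∈ Icc v t with x ⊓ a = v, mu 𝕜 x t = 0 :=
  calc
    ∑ x ∈ Icc v t with x ⊓ a = v, mu 𝕜 x t
      = ∑ x ∈ Icc v t, (∑ y ∈ Icc v (x ⊓ a), mu 𝕜 v y) * mu 𝕜 x t := by
        simp [sum_Icc_mu_right, sum_filter, eq_comm]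
    _ = ∑ y ∈ Icc v a, mu 𝕜 v y * ∑ x ∈ Icc y t, mu 𝕜 x t := by
        simp_rw [sum_mul, mul_sum]
        refine sum_comm' fun x y => ?_
        simp only [mem_Icc, le_inf_iff]
        exact ⟨fun h => ⟨⟨h.2.2.1, h.1.2⟩, h.2.1, h.2.2.2⟩,
          fun h => ⟨⟨h.2.1.trans h.1.1, h.1.2⟩, h.2.1, h.1.1, h.2.2⟩⟩
    _ = 0 := by
        refine sum_eq_zero fun y hy => ?_
        rw [sum_Icc_mu_left, if_neg ((mem_Icc.1 hy).2.trans_lt hat).ne, mul_zero]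

end Mobius

section Finpartition

theorem parts_eq_singleton_of_mem {α : Type*} [Lattice α] [OrderBot α] {a : α}
    {v : Finpartition a} (ha : a ∈ v.parts) : v.parts = {a} :=
  eq_singleton_iff_unique_mem.2
    ⟨ha, fun _ hb => v.disjoint.eq_of_le hb ha (v.ne_bot hb) (v.le hb)⟩

variable {α : Type*} [GeneralizedBooleanAlgebra α] [DecidableEq α] {a b c : α}

/-- The partition of `a` into the two parts `c` and `a \ c`, a coatom of the refinement order. -/
def splitOff (hc : c ≠ ⊥) (hca : c < a) : Finpartition a :=
  (Finpartition.indiscrete hc).extend (b := a \ c) (sdiff_eq_bot_iff.not.2 hca.not_ge)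
    disjoint_sdiff_self_right (sup_sdiff_cancel_right hca.le)

theorem mem_parts_splitOff (hc : c ≠ ⊥) (hca : c < a) :
    b ∈ (splitOff hc hca).parts ↔ b = a \ c ∨ b = c := by
  simp [splitOff]

/-- The set of parts obtained from the set `P` by merging `b` and `c`, in the form in which
`MergeStep` writes it. -/
def mergeParts (P : Finset α) (b c : α) : Finset α :=
  insert (b ⊔ c) ((P.erase b).erase c)

theorem mem_mergeParts {P : Finset α} {d : α} :
    d ∈ mergeParts P b c ↔ d = b ⊔ c ∨ d ≠ c ∧ d ≠ b ∧ d ∈ P := by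
  simp [mergeParts]

variable {v x : Finpartition a}

theorem card_mergeParts_add_one (hb : b ∈ v.parts) (hc : c ∈ v.parts) (hbc : b ≠ c) :
    #(mergeParts v.parts b c) + 1 = #v.parts := by
  have hsup : b ⊔ c ∉ (v.parts.erase b).erase c := fun h =>
    (mem_erase.1 (mem_of_mem_erase h)).1 (v.disjoint.eq_of_le hb
      (mem_of_mem_erase (mem_of_mem_erase h)) (v.ne_bot hb) le_sup_left).symm
  rw [mergeParts, card_insert_of_notMem hsup, card_erase_add_one (mem_erase.2 ⟨hbc.symm, hc⟩),
    card_erase_add_one hb]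

theorem le_splitOff (hc : c ∈ v.parts) (hca : c < a) : v ≤ splitOff (v.ne_bot hc) hca := by
  intro b hb
  obtain rfl | hbc := eq_or_ne b c
  · exact ⟨b, (mem_parts_splitOff ..).2 (.inr rfl), le_rfl⟩
  · exact ⟨a \ c, (mem_parts_splitOff ..).2 (.inl rfl), le_sdiff.2 ⟨v.le hb, v.disjoint hb hc hbc⟩⟩

theorem le_of_parts_eq_mergeParts (hx : x.parts = mergeParts v.parts b c) : v ≤ x := by
  intro d hd
  simp_rw [hx, mem_mergeParts]
  by_cases h : d = b ∨ d = c
  · exact ⟨b ⊔ c, .inl rfl, h.elim (· ▸ le_sup_left) (· ▸ le_sup_right)⟩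
  · exact ⟨d, .inr ⟨fun hc => h (.inr hc), fun hb => h (.inl hb), hd⟩, le_rfl⟩

theorem inf_splitOff_of_parts_eq_mergeParts (hb : b ∈ v.parts) (hc : c ∈ v.parts) (hca : c < a)
    (hx : x.parts = mergeParts v.parts b c) : x ⊓ splitOff (v.ne_bot hc) hca = v := by
  refine le_antisymm ?_ (le_inf (le_of_parts_eq_mergeParts hx) (le_splitOff hc hca))
  intro d hd
  simp only [Finpartition.parts_inf, mem_erase, mem_image, mem_product, Prod.exists] at hd
  obtain ⟨-, X, Y, ⟨hX, hY⟩, rfl⟩ := hd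
  rw [hx, mem_mergeParts] at hX
  rw [mem_parts_splitOff] at hY
  obtain rfl | ⟨-, -, hX⟩ := hX
  · obtain rfl | rfl := hY
    · refine ⟨b, hb, ?_⟩
      rw [inf_sup_right, inf_sdiff_self_right, sup_bot_eq]
      exact inf_le_left
    · exact ⟨Y, hc, inf_le_right⟩
  · exact ⟨X, hX, inf_le_left⟩

theorem parts_eq_mergeParts_of_inf_splitOff {B : α} (hc : c ∈ v.parts) (hca : c < a)
    (hx : x ⊓ splitOff (v.ne_bot hc) hca = v) (hB : B ∈ x.parts) (hcB : c < B) :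
    B \ c ∈ v.parts ∧ x.parts = mergeParts v.parts (B \ c) c := by
  have mem_v : ∀ d ∈ x.parts, d ⊓ (a \ c) ≠ ⊥ → d ⊓ (a \ c) ∈ v.parts := by
    intro d hd hne
    rw [← hx, Finpartition.parts_inf]
    exact mem_erase.2 ⟨hne, mem_image.2
      ⟨(d, a \ c), mem_product.2 ⟨hd, (mem_parts_splitOff ..).2 (.inl rfl)⟩, rfl⟩⟩
  have hBc : B \ c ∈ v.parts := by
    have h : B ⊓ (a \ c) = B \ c := by rw [← inf_sdiff_assoc, inf_eq_left.2 (x.le hB)]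
    exact h ▸ mem_v B hB (h ▸ sdiff_eq_bot_iff.not.2 hcB.not_ge)
  have mem_v_of_ne : ∀ X ∈ x.parts, X ≠ B → X ∈ v.parts := by
    intro X hX hXB
    have h : X ⊓ (a \ c) = X :=
      inf_eq_left.2 (le_sdiff.2 ⟨x.le hX, (x.disjoint hX hB hXB).mono_right hcB.le⟩)
    have hXv := mem_v X hX (h.symm ▸ x.ne_bot hX)
    rwa [h] at hXv
  refine ⟨hBc, ext fun X => ?_⟩
  rw [mem_mergeParts, sdiff_sup_cancel hcB.le]
  constructor
  · intro hX
    refine or_iff_not_imp_left.2 fun hXB => ?_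
    have not_le : ¬ X ≤ B := fun h => hXB (x.disjoint.eq_of_le hX hB (x.ne_bot hX) h)
    exact ⟨fun h => not_le (h.trans_le hcB.le), fun h => not_le (h.trans_le sdiff_le),
      mem_v_of_ne X hX hXB⟩
  · rintro (rfl | ⟨hXc, hXBc, hXv⟩)
    · exact hB
    · obtain ⟨Y, hY, hXY⟩ := (hx ▸ inf_le_left : v ≤ x) hXv
      have hYB : Y ≠ B := by
        rintro rfl
        exact hXBc (v.disjoint.eq_of_le hXv hBc (v.ne_bot hXv)
          (le_sdiff.2 ⟨hXY, v.disjoint hXv hc hXc⟩))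
      rwa [v.disjoint.eq_of_le hXv (mem_v_of_ne Y hY hYB) (v.ne_bot hXv) hXY]

theorem inf_splitOff_eq_iff (hc : c ∈ v.parts) (hca : c < a) :
    x ⊓ splitOff (v.ne_bot hc) hca = v ↔
      x = v ∨ ∃ b ∈ v.parts, b ≠ c ∧ x.parts = mergeParts v.parts b c := by
  constructor
  · intro hx
    obtain ⟨B, hB, hcB⟩ := (hx ▸ inf_le_left : v ≤ x) hc
    obtain rfl | hcB := hcB.eq_or_lt
    · exact .inl (by rwa [inf_eq_left.2 (le_splitOff hB hca)] at hx)
    · obtain ⟨hBc, hparts⟩ := parts_eq_mergeParts_of_inf_splitOff hc hca hx hB hcB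
      have hne : B \ c ≠ c := fun h => v.ne_bot hc (sdiff_eq_right.1 h).2
      exact .inr ⟨B \ c, hBc, hne, hparts⟩
  · rintro (rfl | ⟨b, hb, -, hx⟩)
    · exact inf_eq_left.2 (le_splitOff hc hca)
    · exact inf_splitOff_of_parts_eq_mergeParts hb hc hca hx

end Finpartition

section Chains

variable {α : Type*}

/-- The `r`-chains, written as lists, that lead from `u` to `t` inside `A`. For `MergeStep` and the
one-block partition `t` these are the admissible shuffles of `u`. -/
def chainsTo (r : α → α → Prop) (A : Finset α) (t u : α) : Set (List α) :=
  {l | l.head? = some u ∧ l.getLast? = some t ∧ (∀ x ∈ l, x ∈ A) ∧ l.IsChain r}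

variable {r : α → α → Prop} {A : Finset α} {t u : α}

theorem chainsTo_self (ht : t ∈ A) (hmax : ∀ x ∈ A, ¬ r t x) : chainsTo r A t t = {[t]} := by
  ext l
  constructor
  · rintro ⟨hhead, -, hA, hchain⟩
    match l with
    | [_] => simpa using hhead
    | _ :: x :: _ =>
      obtain rfl := Option.some.inj hhead
      exact absurd (List.isChain_cons_cons.1 hchain).1 (hmax x (hA x (by simp)))
  · rintro rfl
    exact ⟨rfl, rfl, by simpa using ht, List.isChain_singleton _⟩

theorem chainsTo_eq_biUnion [DecidableRel r] (hu : u ∈ A) (hut : u ≠ t) :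
    chainsTo r A t u = ⋃ x ∈ ({x ∈ A | r u x} : Finset α), List.cons u '' chainsTo r A t x := by
  ext l
  simp only [Set.mem_iUnion₂, Set.mem_image, mem_filter, exists_prop]
  constructor
  · rintro ⟨hhead, hlast, hA, hchain⟩
    match l with
    | [_] => exact absurd ((Option.some.inj hhead).symm.trans (Option.some.inj hlast)) hut
    | _ :: x :: l =>
      obtain rfl := Option.some.inj hhead
      rw [List.isChain_cons_cons] at hchain
      rw [List.forall_mem_cons] at hA
      exact ⟨x, ⟨hA.2 x List.mem_cons_self, hchain.1⟩, x :: l, ⟨rfl, hlast, hA.2, hchain.2⟩, rfl⟩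
  · rintro ⟨x, ⟨-, hux⟩, l, ⟨hhead, hlast, hA, hchain⟩, rfl⟩
    match l with
    | _ :: l =>
      obtain rfl := Option.some.inj hhead
      exact ⟨rfl, hlast, List.forall_mem_cons.2 ⟨hu, hA⟩, List.isChain_cons_cons.2 ⟨hux, hchain⟩⟩

theorem pairwiseDisjoint_cons_image_chainsTo (S : Set α) :
    S.PairwiseDisjoint fun x => List.cons u '' chainsTo r A t x := by
  intro x _ y _ hxy
  refine (Set.disjoint_image_iff List.cons_injective).2 (Set.disjoint_left.2 ?_)
  exact fun l hx hy => hxy (Option.some.inj (hx.1.symm.trans hy.1))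

variable {rank : α → ℕ}

theorem finite_chainsTo (ht : t ∈ A) (hrank_t : rank t = 0)
    (hrank : ∀ y ∈ A, ∀ x ∈ A, r y x → rank y = rank x + 1) (hu : u ∈ A) :
    (chainsTo r A t u).Finite := by
  classical
  induction hn : rank u using Nat.strong_induction_on generalizing u with
  | _ n ih =>
    obtain rfl | hut := eq_or_ne u t
    · rw [chainsTo_self ht fun x hx hux => by simpa [hrank_t] using hrank u ht x hx hux]
      exact Set.finite_singleton _
    · rw [chainsTo_eq_biUnion hu hut]
      refine (finite_toSet _).biUnion fun x hx => ?_
      obtain ⟨hxA, hux⟩ := mem_filter.1 hx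
      exact (ih (rank x) (by have := hrank u hu x hxA hux; lia) hxA rfl).image _

theorem ncard_chainsTo [DecidableRel r] (ht : t ∈ A) (hrank_t : rank t = 0)
    (hrank : ∀ y ∈ A, ∀ x ∈ A, r y x → rank y = rank x + 1) (hu : u ∈ A) (hut : u ≠ t) :
    (chainsTo r A t u).ncard = ∑ x ∈ A with r u x, (chainsTo r A t x).ncard := by
  rw [chainsTo_eq_biUnion hu hut, ← set_biUnion_coe, (finite_toSet _).ncard_biUnion
    (fun x hx => (finite_chainsTo ht hrank_t hrank (mem_filter.1 hx).1).image _)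
    (pairwiseDisjoint_cons_image_chainsTo _), finsum_mem_coe_finset]
  simp only [Set.ncard_image_of_injective _ List.cons_injective]

theorem eq_neg_one_pow_mul_ncard_chainsTo {R : Type*} [Ring R] [DecidableRel r] {f : α → R}
    (ht : t ∈ A) (hrank_t : rank t = 0)
    (hrank : ∀ y ∈ A, ∀ x ∈ A, r y x → rank y = rank x + 1) (hf_t : f t = 1)
    (hf : ∀ y ∈ A, y ≠ t → f y = -∑ x ∈ A with r y x, f x) (hu : u ∈ A) :
    f u = (-1) ^ rank u * ((chainsTo r A t u).ncard : R) := by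
  induction hn : rank u using Nat.strong_induction_on generalizing u with
  | _ n ih =>
    subst hn
    obtain rfl | hut := eq_or_ne u t
    · rw [chainsTo_self ht fun x hx hux => by simpa [hrank_t] using hrank u ht x hx hux]
      simp [hrank_t, hf_t]
    · rw [hf u hu hut, ncard_chainsTo ht hrank_t hrank hu hut, Nat.cast_sum, mul_sum,
        ← sum_neg_distrib]
      refine sum_congr rfl fun x hx => ?_
      obtain ⟨hxA, hux⟩ := mem_filter.1 hx
      have hux := hrank u hu x hxA hux
      rw [ih (rank x) (by lia) hxA rfl, hux, pow_succ, mul_neg_one, neg_mul]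

end Chains

section AdmissiblePartition

variable {s : Word} {g : Finset ℕ}

theorem isPartitionOn_iff {P : Finset (Finset ℕ)} :
    IsPartitionOn g P ↔ ∃ u : Finpartition g, u.parts = P := by
  constructor
  · rintro ⟨hne, hdisj, hsup⟩
    exact ⟨⟨P, supIndep_iff_pairwiseDisjoint.2 hdisj, hsup, fun h => not_nonempty_empty (hne _ h)⟩,
      rfl⟩
  · rintro ⟨u, rfl⟩
    exact ⟨fun _ => u.nonempty_of_mem_parts, u.disjoint, u.sup_parts⟩

theorem Admissible.inf {u v : Finpartition g} (hu : Admissible s u.parts)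
    (hv : Admissible s v.parts) : Admissible s (u ⊓ v).parts := by
  intro d hd d' hd' hne j hj hw hinner
  simp only [Finpartition.parts_inf, mem_erase, mem_image, mem_product, Prod.exists] at hd hd'
  obtain ⟨-, b, c, ⟨hb, hc⟩, rfl⟩ := hd
  obtain ⟨-, b', c', ⟨hb', hc'⟩, rfl⟩ := hd'
  obtain ⟨-, i, hi, k, hk, hij, hjk⟩ := hinner
  simp only [inf_eq_inter, mem_inter] at hi hj hk
  obtain rfl | hbb := eq_or_ne b b'
  · have hcc : c ≠ c' := fun h => hne (h ▸ rfl)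
    exact hv c hc c' hc' hcc j hj.2 hw
      ⟨fun h => hcc (v.eq_of_mem_parts hc hc' hj.2 h), i, hi.2, k, hk.2, hij, hjk⟩
  · exact hu b hb b' hb' hbb j hj.1 hw
      ⟨fun h => hbb (u.eq_of_mem_parts hb hb' hj.1 h), i, hi.1, k, hk.1, hij, hjk⟩

theorem admissible_singleton (s : Word) (b : Finset ℕ) : Admissible s {b} := fun _ hb _ hb' hne =>
  absurd ((mem_singleton.1 hb).trans (mem_singleton.1 hb').symm) hne

theorem Admissible.splitOff {v : Finpartition g} {c : Finset ℕ} (hv : Admissible s v.parts)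
    (hc : IsLastBlock v.parts c) (hcg : c < g) :
    Admissible s (splitOff (v.ne_bot hc.1) hcg).parts := by
  intro b hb b' hb' hne j hj hw hinner
  rw [mem_parts_splitOff] at hb hb'
  obtain ⟨hjb', i, hi, k, hk, hij, hjk⟩ := hinner
  obtain rfl | rfl := hb <;> obtain rfl | rfl := hb'
  · exact hne rfl
  · obtain ⟨d, hd, hjd⟩ := v.exists_mem (mem_sdiff.1 hj).1
    exact hv d hd b' hc.1 (fun h => hjb' (h ▸ hjd)) j hjd hw ⟨hjb', i, hi, k, hk, hij, hjk⟩
  · -- The block of `k` begins before the last block `b`, so `j` was already inner in `v`.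
    obtain ⟨hkg, hkb⟩ := mem_sdiff.1 hk
    obtain ⟨d, hd, hkd⟩ := v.exists_mem hkg
    have hdb : d ≠ b := fun h => hkb (h ▸ hkd)
    obtain ⟨i', hi', hlt⟩ := hc.2 d hd hdb
    exact hv b hc.1 d hd hdb.symm j hj hw
      ⟨fun h => hdb (v.eq_of_mem_parts hd hc.1 h hj), i', hi', k, hkd, hlt j hj, hjk⟩
  · exact hne rfl

/-- The elements of `APfin s g`, bundled as elements of `Finpartition g` in order to
inherit the refinement order and its meets. -/
abbrev AdmissiblePartition (s : Word) (g : Finset ℕ) : Type :=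
  {u : Finpartition g // Admissible s u.parts}

namespace AdmissiblePartition

instance : SemilatticeInf (AdmissiblePartition s g) :=
  Subtype.semilatticeInf fun _ _ => Admissible.inf

open scoped Classical in
noncomputable instance : LocallyFiniteOrder (AdmissiblePartition s g) :=
  Fintype.toLocallyFiniteOrder

/-- The one-block partition `1_s`, the greatest admissible partition of a nonempty set of
positions. -/
def oneBlock (s : Word) (hg : g.Nonempty) : AdmissiblePartition s g :=
  ⟨Finpartition.indiscrete hg.ne_empty, admissible_singleton s g⟩

theorem le_oneBlock (hg : g.Nonempty) (u : AdmissiblePartition s g) : u ≤ oneBlock s hg :=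
  fun _ hb => ⟨g, mem_singleton_self g, u.1.subset hb⟩

end AdmissiblePartition

theorem mem_APfin_iff {P : Finset (Finset ℕ)} :
    P ∈ APfin s g ↔ ∃ u : AdmissiblePartition s g, u.1.parts = P := by
  simp only [APfin, mem_filter, isPartitionOn_iff, mem_powerset]
  constructor
  · rintro ⟨-, ⟨u, rfl⟩, hu⟩
    exact ⟨⟨u, hu⟩, rfl⟩
  · rintro ⟨u, rfl⟩
    exact ⟨fun b hb => mem_powerset.2 (u.1.subset hb), ⟨u.1, rfl⟩, u.2⟩

theorem sum_filter_APfin {M : Type*} [AddCommMonoid M] (p : Finset (Finset ℕ) → Prop)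
    [DecidablePred p] [Fintype (AdmissiblePartition s g)] (f : Finset (Finset ℕ) → M) :
    ∑ P ∈ APfin s g with p P, f P =
      ∑ u : AdmissiblePartition s g with p u.1.parts, f u.1.parts := by
  symm
  refine sum_nbij (fun u => u.1.parts) ?_ ?_ ?_ fun _ _ => rfl
  · exact fun u hu => mem_filter.2 ⟨mem_APfin_iff.2 ⟨u, rfl⟩, (mem_filter.1 hu).2⟩
  · exact fun u _ v _ h => Subtype.ext (Finpartition.ext h)
  · intro P hP
    obtain ⟨hP, hp⟩ := mem_filter.1 hP
    obtain ⟨u, rfl⟩ := mem_APfin_iff.1 hP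
    exact ⟨u, by simpa using hp, rfl⟩

theorem IsMobius.apply_eq_mu {m : Finset (Finset ℕ) → Finset (Finset ℕ) → ℂ}
    (hm : IsMobius s g m) {u v : AdmissiblePartition s g} (huv : u ≤ v) :
    m u.1.parts v.1.parts = mu ℂ u v := by
  classical
  have hmem (w : AdmissiblePartition s g) : w.1.parts ∈ APfin s g := mem_APfin_iff.2 ⟨w, rfl⟩
  induction v using WellFoundedLT.induction with
  | _ v ih =>
    obtain rfl | hne := eq_or_ne u v
    · rw [hm.1 _ (hmem u), mu_self]
    have hIco : ({x | Refines u.1.parts x.1.parts ∧ Refines x.1.parts v.1.parts ∧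
        x.1.parts ≠ v.1.parts} : Finset (AdmissiblePartition s g)) = Ico u v := by
      ext x
      simp only [mem_filter_univ, mem_Ico, lt_iff_le_and_ne, ne_eq, Subtype.ext_iff,
        Finpartition.ext_iff]
      rfl
    rw [hm.2 _ (hmem u) _ (hmem v) huv (hne <| Subtype.ext <| Finpartition.ext ·),
      sum_filter_APfin, hIco, mu_eq_neg_sum_Ico_of_ne hne, neg_inj]
    exact sum_congr rfl fun x hx => ih x (mem_Ico.1 hx).2 (mem_Ico.1 hx).1

end AdmissiblePartition

section LastBlock

open AdmissiblePartition

variable {s : Word} {g : Finset ℕ}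

theorem exists_isLastBlock (hg : g.Nonempty) (v : Finpartition g) :
    ∃ c, IsLastBlock v.parts c := by
  obtain ⟨c, hc, hmax⟩ := exists_max_image v.parts Finset.min (v.parts_nonempty hg.ne_empty)
  refine ⟨c, hc, fun b hb hbc => ?_⟩
  obtain ⟨i, hi⟩ := min_of_nonempty (v.nonempty_of_mem_parts hb)
  have hib := mem_of_min hi
  refine ⟨i, hib, fun j hj => ?_⟩
  have hij : i ≤ j := WithTop.coe_le_coe.1 (hi ▸ (hmax b hb).trans (min_le hj))
  exact hij.lt_of_ne fun h => hbc (v.eq_of_mem_parts hb hc hib (h ▸ hj))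

theorem IsLastBlock.unique {P : Finset (Finset ℕ)} {c c' : Finset ℕ} (hc : IsLastBlock P c)
    (hc' : IsLastBlock P c') : c = c' := by
  by_contra hne
  obtain ⟨i, hi, hlt⟩ := hc.2 c' hc'.1 (Ne.symm hne)
  obtain ⟨j, hj, hlt'⟩ := hc'.2 c hc.1 hne
  exact (hlt j hj).asymm (hlt' i hi)

theorem IsLastBlock.mergeStep_iff {P Q : Finset (Finset ℕ)} {c : Finset ℕ}
    (hc : IsLastBlock P c) : MergeStep P Q ↔ ∃ b ∈ P, b ≠ c ∧ Q = mergeParts P b c := by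
  constructor
  · rintro ⟨c', hc', b, hb, hbc, rfl⟩
    obtain rfl := hc.unique hc'
    exact ⟨b, hb, hbc, rfl⟩
  · exact fun ⟨b, hb, hbc, hQ⟩ => ⟨c, hc, b, hb, hbc, hQ⟩

theorem MergeStep.card_add_one {v : Finpartition g} {Q : Finset (Finset ℕ)}
    (h : MergeStep v.parts Q) : #Q + 1 = #v.parts := by
  obtain ⟨c, hc, b, hb, hbc, rfl⟩ := h
  exact card_mergeParts_add_one hb hc.1 hbc

theorem IsLastBlock.inf_splitOff_eq_iff_mergeStep {v x : Finpartition g} {c : Finset ℕ}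
    (hc : IsLastBlock v.parts c) (hcg : c < g) :
    x ⊓ splitOff (v.ne_bot hc.1) hcg = v ↔ x = v ∨ MergeStep v.parts x.parts := by
  rw [inf_splitOff_eq_iff hc.1 hcg, hc.mergeStep_iff]

open scoped Classical in
theorem mu_oneBlock_eq_neg_sum_mergeStep {𝕜 : Type*} [Ring 𝕜] (hg : g.Nonempty)
    {v : AdmissiblePartition s g} (hv : v.1.parts ≠ {g}) :
    mu 𝕜 v (oneBlock s hg) =
      -∑ x : AdmissiblePartition s g with MergeStep v.1.parts x.1.parts,
        mu 𝕜 x (oneBlock s hg) := by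
  obtain ⟨c, hc⟩ := exists_isLastBlock hg v.1
  have hcg : c < g :=
    (v.1.le hc.1).lt_of_ne fun h => hv (parts_eq_singleton_of_mem (h ▸ hc.1))
  let a : AdmissiblePartition s g := ⟨splitOff (v.1.ne_bot hc.1) hcg, v.2.splitOff hc hcg⟩
  have ha : a < oneBlock s hg := by
    refine (le_oneBlock hg a).lt_of_ne fun h => hcg.ne (mem_singleton.1 ?_)
    have hca : c ∈ a.1.parts := (mem_parts_splitOff (v.1.ne_bot hc.1) hcg).2 (.inr rfl)
    rwa [h] at hca
  have hfilter : {x ∈ Icc v (oneBlock s hg) | x ⊓ a = v} =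
      insert v ({x | MergeStep v.1.parts x.1.parts} : Finset (AdmissiblePartition s g)) := by
    ext x
    have hinf : x ⊓ a = v ↔ x = v ∨ MergeStep v.1.parts x.1.parts :=
      Subtype.ext_iff.trans <| (hc.inf_splitOff_eq_iff_mergeStep hcg).trans <|
        or_congr_left Subtype.ext_iff.symm
    rw [mem_filter, mem_Icc, mem_insert, mem_filter_univ, ← hinf]
    exact ⟨And.right, fun h => ⟨⟨h ▸ inf_le_left, le_oneBlock hg x⟩, h⟩⟩
  have hvv : ¬ MergeStep v.1.parts v.1.parts := fun h => (Nat.succ_ne_self _) h.card_add_one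
  have hsum := sum_mu_filter_inf_eq (𝕜 := 𝕜) ha v
  rw [hfilter, sum_insert (by simpa using hvv)] at hsum
  exact eq_neg_of_add_eq_zero_left hsum

end LastBlock

open AdmissiblePartition in
theorem mobius_eq_shuffles_general (s : Word) {g : Finset ℕ} (hg : g.Nonempty)
    (m : Finset (Finset ℕ) → Finset (Finset ℕ) → ℂ) (hm : IsMobius s g m)
    (v : Finset (Finset ℕ)) (hv : v ∈ APfin s g) :
    m v {g} = (-1) ^ (#v - 1) * ((chainsTo MergeStep (APfin s g) {g} v).ncard : ℂ) := by
  classical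
  have m_eq_mu (u : AdmissiblePartition s g) : m u.1.parts {g} = mu ℂ u (oneBlock s hg) :=
    hm.apply_eq_mu (le_oneBlock hg u)
  have hone : {g} ∈ APfin s g := mem_APfin_iff.2 ⟨oneBlock s hg, rfl⟩
  refine eq_neg_one_pow_mul_ncard_chainsTo (f := (m · {g})) (rank := (#· - 1))
    hone (by simp) ?_ (hm.1 _ hone) ?_ hv
  · intro y hy x hx hyx
    obtain ⟨v, rfl⟩ := mem_APfin_iff.1 hy
    obtain ⟨u, rfl⟩ := mem_APfin_iff.1 hx
    have := (u.1.parts_nonempty hg.ne_empty).card_pos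
    have := hyx.card_add_one
    lia
  · intro y hy hne
    obtain ⟨u, rfl⟩ := mem_APfin_iff.1 hy
    simp only [sum_filter_APfin, m_eq_mu]
    exact mu_oneBlock_eq_neg_sum_mergeStep hg hne

open scoped Classical in
/-- `m(v|1_s) = (−1)^{b(v)−1} a(v)`: the Möbius function of `AP(s)`
against the one-block partition is a sign times the number of admissible shuffles. -/
theorem mobius_eq_shuffles (s : Word) (hs : s ≠ [])
    (m : Finset (Finset ℕ) → Finset (Finset ℕ) → ℂ)
    (hm : IsMobius s (Finset.range s.length) m)
    (v : Finset (Finset ℕ)) (hv : v ∈ APfin s (Finset.range s.length)) :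
    m v {Finset.range s.length} = (-1) ^ (v.card - 1) * (shuffleCount s v : ℂ) :=
  mobius_eq_shuffles_general s (nonempty_range_iff.2 (List.length_pos_iff.2 hs).ne') m hm v hv
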